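/- Let m, k be integers with m ≥ k ≥ 0 and set μ := (1/3)(2k − m − 1, 2m − k + 2, −(m + k + 1)) ∈ ℝ³ and η := (1/3)(−(m + k + 1), 2m − k + 2, 2k − m − 1) ∈ ℝ³. Then η = s_{ε₁−ε₃}μ and ⟨μ, (ε₁−ε₃)^∨⟩ = k, so the one-term sequence (ε₁−ε₃) links μ to η; moreover neither the sequence (ε₁−ε₂, ε₂−ε₃, ε₁−ε₂) nor the sequence (ε₂−ε₃, ε₁−ε₂, ε₂−ε₃) links μ to η. -/

import Mathlib

open Finset

/-- The standard inner product on ℝ³. -/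
noncomputable def ip (x y : Fin 3 → ℝ) : ℝ := ∑ i, x i * y i

/-- The coroot `β^∨ = 2β/⟨β,β⟩` of a nonzero vector `β`. -/
noncomputable def coroot (β : Fin 3 → ℝ) : Fin 3 → ℝ := (2 / ip β β) • β

/-- The reflection `s_β(x) = x − ⟨x,β^∨⟩β`. -/
noncomputable def sRefl (β x : Fin 3 → ℝ) : Fin 3 → ℝ := x - (ip x (coroot β)) • β

/-- The root `ε_i − ε_j = e_i − e_j`. -/
noncomputable def eps (i j : Fin 3) : Fin 3 → ℝ :=
  fun t => (if t = i then 1 else 0) - (if t = j then 1 else 0)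

/-- Bernstein–Gelfand–Gelfand: a sequence `(β₁, …, β_t)` links `ξ` to `ζ` if, with
`ξ₀ := ξ` and `ξ_i := s_{β_i} ξ_{i−1}`, one has `ξ_t = ζ` and each `⟨ξ_{i−1}, β_i^∨⟩`
is a nonnegative integer. -/
def LinksSeq : List (Fin 3 → ℝ) → (Fin 3 → ℝ) → (Fin 3 → ℝ) → Prop
  | [], ξ, ζ => ξ = ζ
  | β :: bs, ξ, ζ => (∃ n : ℕ, ip ξ (coroot β) = n) ∧ LinksSeq bs (sRefl β ξ) ζ

/-!
On `ε_i − ε_j` the pairing with the coroot is `x_i − x_j` and the reflection is the transposition of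
the coordinates `i` and `j`. Both three-term sequences fail for the same reason: the pairing
`⟨μ, (ε₁ − ε₂)^∨⟩ = k − m − 1` is negative. It is the first condition of
`(ε₁ − ε₂, ε₂ − ε₃, ε₁ − ε₂)`, and since `s_{ε₂−ε₃} s_{ε₁−ε₂} (ε₂ − ε₃) = ε₁ − ε₂`, it is also the
last condition of `(ε₂ − ε₃, ε₁ − ε₂, ε₂ − ε₃)`.
-/

section RootReflections

variable {i j : Fin 3}

lemma ip_eps (x : Fin 3 → ℝ) (i j : Fin 3) : ip x (eps i j) = x i - x j := by
  simp [ip, eps, mul_sub]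

lemma coroot_eps (hij : i ≠ j) : coroot (eps i j) = eps i j := by
  have norm_sq : ip (eps i j) (eps i j) = 2 := by
    rw [ip_eps]
    norm_num [eps, hij, hij.symm]
  rw [coroot, norm_sq, div_self two_ne_zero, one_smul]

lemma ip_coroot_eps (x : Fin 3 → ℝ) (hij : i ≠ j) : ip x (coroot (eps i j)) = x i - x j := by
  rw [coroot_eps hij, ip_eps]

lemma sRefl_eps (x : Fin 3 → ℝ) (hij : i ≠ j) : sRefl (eps i j) x = x ∘ Equiv.swap i j := by
  ext t
  simp only [sRefl, ip_coroot_eps x hij, eps, Pi.sub_apply, Pi.smul_apply, smul_eq_mul,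
    Function.comp_apply, Equiv.swap_apply_def]
  split_ifs <;> simp_all

end RootReflections

section LinkingSequences

variable {i j l : Fin 3} {bs : List (Fin 3 → ℝ)} {ξ ζ : Fin 3 → ℝ}

lemma linksSeq_eps_cons_iff (hij : i ≠ j) :
    LinksSeq (eps i j :: bs) ξ ζ ↔
      (∃ n : ℕ, ξ i - ξ j = n) ∧ LinksSeq bs (ξ ∘ Equiv.swap i j) ζ := by
  rw [LinksSeq, ip_coroot_eps ξ hij, sRefl_eps ξ hij]

lemma LinksSeq.le_of_eps_cons (hij : i ≠ j) (h : LinksSeq (eps i j :: bs) ξ ζ) : ξ j ≤ ξ i := by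
  obtain ⟨⟨n, hn⟩, -⟩ := (linksSeq_eps_cons_iff hij).1 h
  exact sub_nonneg.1 (hn ▸ n.cast_nonneg)

lemma LinksSeq.le_of_eps_braid (hij : i ≠ j) (hjl : j ≠ l) (hil : i ≠ l)
    (h : LinksSeq (eps j l :: eps i j :: eps j l :: bs) ξ ζ) : ξ j ≤ ξ i := by
  have after_two := ((linksSeq_eps_cons_iff hij).1 ((linksSeq_eps_cons_iff hjl).1 h).2).2
  simpa [Equiv.swap_apply_of_ne_of_ne hij hil, Equiv.swap_apply_of_ne_of_ne hil.symm hjl.symm]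
    using after_two.le_of_eps_cons hjl

end LinkingSequences

theorem stmt4_general (m : ℝ) (k : ℤ) (hk : 0 ≤ k) (hkm : k < m + 1) (μ η : Fin 3 → ℝ)
    (hμ : μ = ![(2 * (k : ℝ) - m - 1) / 3, (2 * m - k + 2) / 3, -(m + k + 1) / 3])
    (hη : η = ![-(m + k + 1) / 3, (2 * m - k + 2) / 3, (2 * (k : ℝ) - m - 1) / 3]) :
    η = sRefl (eps 0 2) μ ∧
    ip μ (coroot (eps 0 2)) = (k : ℝ) ∧
    LinksSeq [eps 0 2] μ η ∧
    ¬ LinksSeq [eps 0 1, eps 1 2, eps 0 1] μ η ∧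
    ¬ LinksSeq [eps 1 2, eps 0 1, eps 1 2] μ η := by
  have pairing : ip μ (coroot (eps 0 2)) = k := by
    rw [ip_coroot_eps μ (by decide), hμ]
    simp only [Matrix.cons_val]
    ring
  have reflection : η = sRefl (eps 0 2) μ := by
    rw [sRefl_eps μ (by decide), hμ, hη]
    ext t
    fin_cases t <;> rfl
  have lt : μ 0 < μ 1 := by
    simp only [hμ, Matrix.cons_val]
    linarith
  have pairing_nat : ∃ n : ℕ, ip μ (coroot (eps 0 2)) = n := by
    lift k to ℕ using hk
    exact ⟨k, pairing⟩
  exact ⟨reflection, pairing, ⟨pairing_nat, reflection.symm⟩,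
    fun h => lt.not_ge (h.le_of_eps_cons (by decide)),
    fun h => lt.not_ge (h.le_of_eps_braid (by decide) (by decide) (by decide))⟩

/-- for integers `m ≥ k ≥ 0`, with `μ = (1/3)(2k−m−1, 2m−k+2, −(m+k+1))` and
`η = (1/3)(−(m+k+1), 2m−k+2, 2k−m−1)`, one has `η = s_{ε₁−ε₃}μ` and `⟨μ,(ε₁−ε₃)^∨⟩ = k`,
so `(ε₁−ε₃)` links `μ` to `η`; moreover neither `(ε₁−ε₂, ε₂−ε₃, ε₁−ε₂)` nor
`(ε₂−ε₃, ε₁−ε₂, ε₂−ε₃)` links `μ` to `η`. -/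
theorem stmt4 (m k : ℤ) (hk : 0 ≤ k) (hmk : k ≤ m)
    (μ η : Fin 3 → ℝ)
    (hμ : μ = ![(2 * (k : ℝ) - m - 1) / 3, (2 * (m : ℝ) - k + 2) / 3,
                 -((m : ℝ) + k + 1) / 3])
    (hη : η = ![-((m : ℝ) + k + 1) / 3, (2 * (m : ℝ) - k + 2) / 3,
                 (2 * (k : ℝ) - m - 1) / 3]) :
    η = sRefl (eps 0 2) μ ∧
    ip μ (coroot (eps 0 2)) = (k : ℝ) ∧
    LinksSeq [eps 0 2] μ η ∧
    ¬ LinksSeq [eps 0 1, eps 1 2, eps 0 1] μ η ∧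
    ¬ LinksSeq [eps 1 2, eps 0 1, eps 1 2] μ η :=
  stmt4_general m k hk (mod_cast Int.lt_add_one_of_le hmk) μ η hμ hη
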